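/- Let N ≥ 1 and let u, t ∈ ℂ^{N+1} satisfy |Re(u_{N+1}−u_i)| < 2 for i = 1,…,N and |Im t_j| < π/2 for j = 1,…,N+1. Then the function z ↦ ∏_{1≤j<k≤N} sinh(z_j−z_k) / ∏_{j=1}^{N+1} ∏_{k=1}^{N} cosh(t_j−z_k) · exp(Σ_{j=1}^{N} z_j (u_{N+1}−u_j)) is Lebesgue integrable on ℝ^N; denote the integral by C_N(u,t). If in addition u_i ≠ u_{N+1} for i = 1,…,N and t_j ≠ t_k for 1 ≤ j < k ≤ N+1, then C_N(u,t) = ∏_{j=1}^{N} (π/sin(π(u_{N+1}−u_j)/2)) · ∏_{1≤j<k≤N+1} (1/sinh(t_j−t_k)) · Σ_{τ∈S_{N+1}} sgn(τ) · exp(Σ_{j=1}^{N} t_{τ(j)} (u_{N+1}−u_j)). -/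

import Mathlib

open MeasureTheory Complex

/-!
By the hyperbolic Cauchy determinant, `∏_{j<k≤N} sinh (t_j - t_k)` times the integrand is the
determinant with entries `exp (z_k a_k) / (cosh (t_i - z_k) cosh (t_{N+1} - z_k))`, where
`a_k = u_{N+1} - u_k`. Its `k`-th column only involves `z_k`, so the integral is the determinant of
the one-variable integrals. Each of these is `∫ exp (x a) (tanh (x - s) - tanh (x - t)) dx` up to
a factor `sinh (t - s)`, and is evaluated by Cauchy's theorem on the strip `0 ≤ Im z ≤ π`: the
function `(exp (z a) - exp (p a)) tanh (z - r)` is holomorphic there because `p = r + π i / 2` is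
the only pole of `tanh (z - r)` in the strip, and its values on the two edges are related by the
period `π i` of `tanh`. The resulting determinant with entries
`exp (t_i a_k) - exp (t_{N+1} a_k)` is the Schur complement of a determinant of size `N + 1` with a
column of ones, whose Leibniz expansion is the sum over permutations.
-/

section Determinant

variable {K : Type*} [Field K] {n : ℕ}

lemma det_eq_last_mul_det_sub (A : Matrix (Fin (n + 1)) (Fin (n + 1)) K)
    (hA : A (Fin.last n) (Fin.last n) ≠ 0) :
    A.det = A (Fin.last n) (Fin.last n) * (Matrix.of fun i j : Fin n =>
      A i.castSucc j.castSucc - A i.castSucc (Fin.last n) / A (Fin.last n) (Fin.last n) *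
        A (Fin.last n) j.castSucc).det := by
  set c : Fin (n + 1) → K := fun i =>
    if i = Fin.last n then 0 else -(A i (Fin.last n) / A (Fin.last n) (Fin.last n)) with hc
  set B : Matrix (Fin (n + 1)) (Fin (n + 1)) K :=
    Matrix.of fun i j => A i j + c i * A (Fin.last n) j with hB
  have det_B : B.det = A.det :=
    Matrix.det_eq_of_forall_row_eq_smul_add_const c (Fin.last n) (by simp [hc]) fun _ _ => rfl
  have c_castSucc (i : Fin n) :
      c i.castSucc = -(A i.castSucc (Fin.last n) / A (Fin.last n) (Fin.last n)) :=
    if_neg (Fin.castSucc_lt_last i).ne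
  have column_zero (i : Fin n) : B i.castSucc (Fin.last n) = 0 := by
    simp [hB, c_castSucc, hA]
  have pivot : B (Fin.last n) (Fin.last n) = A (Fin.last n) (Fin.last n) := by simp [hB, hc]
  rw [← det_B, Matrix.det_succ_column _ (Fin.last n), Fin.sum_univ_castSucc]
  simp only [column_zero, pivot, mul_zero, zero_mul, Finset.sum_const_zero, zero_add,
    Even.neg_one_pow ⟨_, rfl⟩, one_mul]
  congr 2
  ext i j
  simp [hB, c_castSucc, sub_eq_add_neg]

lemma prod_filter_lt_castSucc {M : Type*} [CommMonoid M] (f : Fin (n + 1) → Fin (n + 1) → M) :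
    ∏ q ∈ Finset.univ.filter (fun q : Fin (n + 1) × Fin (n + 1) => q.1 < q.2), f q.1 q.2 =
      (∏ i : Fin n, f i.castSucc (Fin.last n)) *
        ∏ q ∈ Finset.univ.filter (fun q : Fin n × Fin n => q.1 < q.2),
          f q.1.castSucc q.2.castSucc := by
  simp only [Finset.prod_filter, Fintype.prod_prod_type, Fin.prod_univ_castSucc,
    Fin.castSucc_lt_castSucc_iff, Fin.castSucc_lt_last, if_true, Finset.prod_mul_distrib,
    (Fin.le_last _).not_gt, if_false, Finset.prod_const_one, mul_one]
  exact mul_comm _ _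

lemma prod_filter_lt_mul {ι M : Type*} [Fintype ι] [LinearOrder ι] [CommMonoid M] (g : ι → M) :
    ∏ q ∈ Finset.univ.filter (fun q : ι × ι => q.1 < q.2), g q.1 * g q.2 =
      ∏ i, g i ^ (Fintype.card ι - 1) := by
  have pair (i j : ι) : (if i < j then g i else 1) * (if j < i then g i else 1) =
      if j ∈ ({i} : Finset ι)ᶜ then g i else 1 := by
    rcases lt_trichotomy i j with h | rfl | h
    · simp [h, h.ne', h.not_gt]
    · simp
    · simp [h, h.ne, h.not_gt]
  calc ∏ q ∈ Finset.univ.filter (fun q : ι × ι => q.1 < q.2), g q.1 * g q.2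
      = (∏ i, ∏ j, if i < j then g i else 1) * ∏ j, ∏ i, if j < i then g i else 1 := by
        simp only [Finset.prod_filter, Fintype.prod_prod_type, ← Finset.prod_mul_distrib,
          ite_mul_ite, mul_one]
    _ = ∏ i, ∏ j, if j ∈ ({i} : Finset ι)ᶜ then g i else 1 := by
        rw [Finset.prod_comm (f := fun j i => if j < i then g i else 1)]
        simp only [← Finset.prod_mul_distrib, pair]
    _ = ∏ i, g i ^ (Fintype.card ι - 1) := by
        simp only [Finset.prod_ite_mem, Finset.univ_inter, Finset.prod_const, Finset.card_compl,
          Finset.card_singleton]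

lemma det_of_mul_mul {m R : Type*} [Fintype m] [DecidableEq m] [CommRing R] (v w : m → R)
    (A : m → m → R) :
    (Matrix.of fun i j => v i * (w j * A i j)).det =
      (∏ i, v i) * ((∏ j, w j) * (Matrix.of A).det) := by
  rw [← Matrix.det_mul_row, ← Matrix.det_mul_column]
  rfl

theorem det_inv_of_mul_sub_mul_eq : ∀ {n : ℕ} (c f g : Fin n → Fin n → K),
    (∀ i j, c i j ≠ 0) → (∀ i j k l, c i l * c k j - c i j * c k l = f i k * g j l) →
    (Matrix.of fun i j => (c i j)⁻¹).det =
      (∏ q ∈ Finset.univ.filter (fun q : Fin n × Fin n => q.1 < q.2), f q.1 q.2) *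
        (∏ q ∈ Finset.univ.filter (fun q : Fin n × Fin n => q.1 < q.2), g q.1 q.2) /
          ∏ i, ∏ j, c i j
  | 0, _, _, _, _, _ => by simp
  | n + 1, c, f, g, hc, hfg => by
    have ih := det_inv_of_mul_sub_mul_eq (fun i j : Fin n => c i.castSucc j.castSucc)
      (fun i j => f i.castSucc j.castSucc) (fun i j => g i.castSucc j.castSucc)
      (fun _ _ => hc _ _) (fun _ _ _ _ => hfg _ _ _ _)
    -- Pivoting at the last entry rescales the rows and columns of the smaller matrix.
    have schur_entry (i j : Fin n) :
        (c i.castSucc j.castSucc)⁻¹ - (c i.castSucc (Fin.last n))⁻¹ /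
            (c (Fin.last n) (Fin.last n))⁻¹ * (c (Fin.last n) j.castSucc)⁻¹ =
          f i.castSucc (Fin.last n) / c i.castSucc (Fin.last n) *
            (g j.castSucc (Fin.last n) / c (Fin.last n) j.castSucc *
              (c i.castSucc j.castSucc)⁻¹) := by
      have := hc i.castSucc j.castSucc
      have := hc i.castSucc (Fin.last n)
      have := hc (Fin.last n) j.castSucc
      have := hc (Fin.last n) (Fin.last n)
      field_simp
      linear_combination hfg i.castSucc j.castSucc (Fin.last n) (Fin.last n)
    rw [det_eq_last_mul_det_sub _ (inv_ne_zero (hc _ _))]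
    simp only [Matrix.of_apply, schur_entry]
    rw [det_of_mul_mul, ih, prod_filter_lt_castSucc f, prod_filter_lt_castSucc g]
    simp only [Fin.prod_univ_castSucc, Finset.prod_mul_distrib, Finset.prod_div_distrib]
    ring

end Determinant

section Hyperbolic

lemma cosh_mul_cosh_sub_cosh_mul_cosh (a b x y : ℂ) :
    cosh (a - y) * cosh (b - x) - cosh (a - x) * cosh (b - y) = sinh (a - b) * sinh (x - y) := by
  simp only [cosh_sub, sinh_sub]
  ring

lemma tanh_sub_tanh {x y : ℂ} (hx : cosh x ≠ 0) (hy : cosh y ≠ 0) :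
    tanh x - tanh y = sinh (x - y) / (cosh x * cosh y) := by
  rw [tanh_eq_sinh_div_cosh, tanh_eq_sinh_div_cosh, sinh_sub]
  field_simp

lemma cosh_eq_I_mul_sinh_sub (w : ℂ) : cosh w = I * sinh (w - Real.pi / 2 * I) := by
  rw [sinh_sub, cosh_mul_I, sinh_mul_I, cos_pi_div_two, sin_pi_div_two]
  linear_combination cosh w * I_sq

lemma sinh_ne_zero_of_abs_im_lt_pi {w : ℂ} (hw : |w.im| < Real.pi) (hw₀ : w ≠ 0) :
    sinh w ≠ 0 := by
  rw [← mul_ne_zero_iff_right I_ne_zero, ← sin_mul_I, Ne, sin_eq_zero_iff]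
  rintro ⟨k, hk⟩
  have him : -w.im = k * Real.pi := by simpa using congrArg re hk
  have hre : w.re = 0 := by simpa using congrArg im hk
  have hk₀ : k = 0 := by
    rw [← abs_neg, him, abs_mul, abs_of_pos Real.pi_pos] at hw
    have : |(k : ℝ)| < 1 := by nlinarith [Real.pi_pos]
    exact Int.abs_lt_one_iff.1 (by exact_mod_cast this)
  exact hw₀ (Complex.ext hre (by simpa [hk₀] using him))

lemma sinh_sub_ne_zero {t s : ℂ} (ht : |t.im| < Real.pi / 2) (hs : |s.im| < Real.pi / 2)
    (hts : t ≠ s) : sinh (t - s) ≠ 0 := by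
  refine sinh_ne_zero_of_abs_im_lt_pi ?_ (sub_ne_zero.2 hts)
  calc |(t - s).im| ≤ |t.im| + |s.im| := by simpa only [sub_im] using abs_sub t.im s.im
    _ < Real.pi := by linarith

lemma sin_pi_mul_div_two_ne_zero {a : ℂ} (ha : |a.re| < 2) (ha₀ : a ≠ 0) :
    sin (Real.pi * a / 2) ≠ 0 := by
  have im_eq : (Real.pi * a / 2 * I).im = Real.pi / 2 * a.re := by
    rw [mul_I_im, mul_div_right_comm, ← ofReal_ofNat, ← ofReal_div, re_ofReal_mul]
  have hne : Real.pi * a / 2 * I ≠ 0 := by simp [Real.pi_ne_zero, ha₀]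
  have hsinh := sinh_ne_zero_of_abs_im_lt_pi (w := Real.pi * a / 2 * I) ?_ hne
  · rw [sinh_mul_I] at hsinh
    exact left_ne_zero_of_mul hsinh
  · rw [im_eq, abs_mul, abs_of_pos Real.pi_div_two_pos]
    nlinarith [Real.pi_pos]

lemma cos_im_mul_cosh_re_le_norm_cosh (w : ℂ) :
    Real.cos w.im * Real.cosh w.re ≤ ‖cosh w‖ := by
  have hre : (cosh w).re = Real.cosh w.re * Real.cos w.im := by
    conv_lhs => rw [← re_add_im w]
    rw [cosh_add, cosh_mul_I, sinh_mul_I, ← ofReal_cosh, ← ofReal_sinh, ← ofReal_cos, ← ofReal_sin]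
    simp [cos_ofReal_re]
  rw [mul_comm, ← hre]
  exact re_le_norm _

lemma exp_abs_div_two_le_cosh (x : ℝ) : Real.exp |x| / 2 ≤ Real.cosh x := by
  rw [← Real.cosh_abs, Real.cosh_eq]
  linarith [Real.exp_pos (-|x|)]

lemma mul_exp_abs_le_norm_cosh_sub {t : ℂ} (ht : |t.im| < Real.pi / 2) (x : ℝ) :
    Real.cos t.im * (Real.exp (-|t.re|) / 2) * Real.exp |x| ≤ ‖cosh (t - x)‖ := by
  have hcos : 0 < Real.cos t.im := Real.cos_pos_of_mem_Ioo (abs_lt.1 ht)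
  calc Real.cos t.im * (Real.exp (-|t.re|) / 2) * Real.exp |x|
      = Real.cos t.im * (Real.exp (|x| - |t.re|) / 2) := by
        rw [sub_eq_neg_add, Real.exp_add]; ring
    _ ≤ Real.cos t.im * (Real.exp |t.re - x| / 2) := by
        rw [abs_sub_comm]
        gcongr
        exact abs_sub_abs_le_abs_sub x t.re
    _ ≤ Real.cos t.im * Real.cosh (t.re - x) := by
        gcongr
        exact exp_abs_div_two_le_cosh _
    _ ≤ ‖cosh (t - x)‖ := by simpa using cos_im_mul_cosh_re_le_norm_cosh (t - x)

lemma cosh_sub_ofReal_ne_zero {t : ℂ} (ht : |t.im| < Real.pi / 2) (x : ℝ) : cosh (t - x) ≠ 0 := by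
  have hcos : 0 < Real.cos t.im := Real.cos_pos_of_mem_Ioo (abs_lt.1 ht)
  exact norm_pos_iff.1 ((by positivity : (0 : ℝ) < _).trans_le (mul_exp_abs_le_norm_cosh_sub ht x))

lemma exp_abs_re_div_four_le_norm_cosh {w : ℂ} (hw : 1 ≤ |w.re|) :
    Real.exp |w.re| / 4 ≤ ‖cosh w‖ := by
  have hexp : Real.exp (-|w.re|) ≤ Real.exp |w.re| / 2 := by
    rw [Real.exp_neg, inv_le_iff_one_le_mul₀ (by positivity)]
    nlinarith [Real.add_one_le_exp |w.re|]
  calc Real.exp |w.re| / 4 ≤ |Real.sinh w.re| := by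
        rw [Real.abs_sinh, Real.sinh_eq]
        linarith
    _ = |‖exp w‖ - ‖-exp (-w)‖| / 2 := by
        rw [norm_neg, norm_exp, norm_exp, neg_re, Real.sinh_eq, abs_div, abs_two]
    _ ≤ ‖exp w - -exp (-w)‖ / 2 := by
        gcongr
        exact abs_norm_sub_norm_le _ _
    _ = ‖cosh w‖ := by rw [sub_neg_eq_add, cosh, norm_div, RCLike.norm_ofNat]

lemma norm_exp_ofReal_mul_le (x : ℝ) (a : ℂ) : ‖exp (x * a)‖ ≤ Real.exp (|a.re| * |x|) := by
  rw [norm_exp, re_ofReal_mul, mul_comm, ← abs_mul]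
  exact Real.exp_le_exp.2 (le_abs_self _)

lemma norm_sinh_ofReal_sub_le (x y : ℝ) :
    ‖sinh ((x : ℂ) - y)‖ ≤ Real.exp |x| * Real.exp |y| := by
  rw [← ofReal_sub, ← ofReal_sinh, norm_real, Real.norm_eq_abs, Real.abs_sinh, Real.sinh_eq,
    ← Real.exp_add]
  have := Real.exp_le_exp.2 (abs_sub x y)
  linarith [Real.exp_pos (-|x - y|), Real.exp_pos |x - y|]

end Hyperbolic

section OneVariableIntegrability

lemma integrable_exp_neg_mul_abs {b : ℝ} (hb : 0 < b) :
    Integrable fun x : ℝ => Real.exp (-b * |x|) := by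
  rw [← integrableOn_univ, ← Set.Iic_union_Ioi (a := (0 : ℝ)), integrableOn_union]
  constructor
  · refine (integrableOn_exp_mul_Iic hb 0).congr_fun (fun x hx => ?_) measurableSet_Iic
    rw [abs_of_nonpos hx, neg_mul_neg]
  · refine (integrableOn_exp_mul_Ioi (neg_lt_zero.2 hb) 0).congr_fun (fun x hx => ?_)
      measurableSet_Ioi
    rw [abs_of_pos hx]

lemma integrable_exp_mul_abs_div_norm_prod_cosh {ι : Type*} [Fintype ι] {t : ι → ℂ}
    (ht : ∀ j, |(t j).im| < Real.pi / 2) {b : ℝ} (hb : b < Fintype.card ι) :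
    Integrable fun x : ℝ => Real.exp (b * |x|) / ‖∏ j, cosh (t j - x)‖ := by
  set C : ι → ℝ := fun j => Real.cos (t j).im * (Real.exp (-|(t j).re|) / 2)
  have C_pos (j : ι) : 0 < C j :=
    mul_pos (Real.cos_pos_of_mem_Ioo (abs_lt.1 (ht j))) (by positivity)
  have prod_C_pos : 0 < ∏ j, C j := Finset.prod_pos fun j _ => C_pos j
  have prod_cosh_ne_zero (x : ℝ) : ∏ j, cosh (t j - x) ≠ 0 :=
    Finset.prod_ne_zero_iff.2 fun j _ => cosh_sub_ofReal_ne_zero (ht j) x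
  have prod_cosh_ge (x : ℝ) :
      (∏ j, C j) * Real.exp (Fintype.card ι * |x|) ≤ ‖∏ j, cosh (t j - x)‖ := by
    rw [norm_prod, Real.exp_nat_mul, ← Finset.card_univ, ← Finset.prod_const,
      ← Finset.prod_mul_distrib]
    exact Finset.prod_le_prod (fun j _ => (mul_pos (C_pos j) (Real.exp_pos _)).le)
      fun j _ => mul_exp_abs_le_norm_cosh_sub (ht j) x
  refine ((integrable_exp_neg_mul_abs (sub_pos.2 hb)).const_mul (∏ j, C j)⁻¹).mono' ?_
    (.of_forall fun x => ?_)
  · exact (Continuous.div (by fun_prop) (by fun_prop)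
      fun x => norm_ne_zero_iff.2 (prod_cosh_ne_zero x)).aestronglyMeasurable
  · calc ‖Real.exp (b * |x|) / ‖∏ j, cosh (t j - x)‖‖
        = Real.exp (b * |x|) / ‖∏ j, cosh (t j - x)‖ := Real.norm_of_nonneg (by positivity)
      _ ≤ Real.exp (b * |x|) / ((∏ j, C j) * Real.exp (Fintype.card ι * |x|)) := by
          gcongr
          exact prod_cosh_ge x
      _ = (∏ j, C j)⁻¹ * Real.exp (-(Fintype.card ι - b) * |x|) := by
          rw [neg_sub, sub_mul, Real.exp_sub]
          field_simp

lemma integrable_exp_mul_div_cosh_mul_cosh {a t s : ℂ} (ha : |a.re| < 2)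
    (ht : |t.im| < Real.pi / 2) (hs : |s.im| < Real.pi / 2) :
    Integrable fun x : ℝ => exp (x * a) / (cosh (t - x) * cosh (s - x)) := by
  have key := integrable_exp_mul_abs_div_norm_prod_cosh (t := ![t, s]) (b := |a.re|)
    (Fin.forall_fin_two.2 ⟨ht, hs⟩) (by simpa using ha)
  refine key.mono' ?_ (.of_forall fun x => ?_)
  · exact (Continuous.div (by fun_prop) (by fun_prop) fun x => mul_ne_zero
      (cosh_sub_ofReal_ne_zero ht x) (cosh_sub_ofReal_ne_zero hs x)).aestronglyMeasurable
  · rw [norm_div, Fin.prod_univ_two]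
    exact div_le_div_of_nonneg_right (norm_exp_ofReal_mul_le x a) (norm_nonneg _)

end OneVariableIntegrability

section Strip

open Filter Topology

variable {E : Type*} [NormedAddCommGroup E] [CompleteSpace E] {H : ℂ → E} {c d : ℝ}

lemma tendsto_intervalIntegral_vertical [NormedSpace ℝ E] {L : Filter ℝ} [L.IsCountablyGenerated]
    {l : E} (hcd : c ≤ d) (hH : ContinuousOn H (im ⁻¹' Set.Icc c d))
    (hl : Tendsto H (comap re L ⊓ 𝓟 (im ⁻¹' Set.Icc c d)) (𝓝 l)) :
    Tendsto (fun R : ℝ => ∫ y : ℝ in c..d, H (R + y * I)) L (𝓝 ((d - c) • l)) := by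
  have mem_strip {y : ℝ} (hy : y ∈ Set.uIoc c d) (R : ℝ) :
      (R + y * I : ℂ) ∈ im ⁻¹' Set.Icc c d := by
    rw [Set.uIoc_of_le hcd] at hy
    simpa using Set.Ioc_subset_Icc_self hy
  rw [← intervalIntegral.integral_const]
  refine intervalIntegral.tendsto_integral_filter_of_dominated_convergence (fun _ => ‖l‖ + 1)
    (.of_forall fun R => ?_) ?_ intervalIntegrable_const (.of_forall fun y hy => ?_)
  · exact (hH.comp (by fun_prop) fun y hy => mem_strip hy R).aestronglyMeasurable
      measurableSet_uIoc
  · have bound : ∀ᶠ z in comap re L ⊓ 𝓟 (im ⁻¹' Set.Icc c d), ‖H z‖ < ‖l‖ + 1 :=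
      hl.norm.eventually_lt_const (lt_add_one _)
    rw [eventually_inf_principal, eventually_comap] at bound
    filter_upwards [bound] with R hR
    exact .of_forall fun y hy => (hR (R + y * I) (by simp) (mem_strip hy R)).le
  · refine hl.comp (tendsto_inf.2 ⟨tendsto_comap_iff.2 ?_,
      tendsto_principal.2 (.of_forall (mem_strip hy))⟩)
    exact tendsto_id.congr fun R => by simp

theorem integral_sub_eq_of_differentiableOn_strip [NormedSpace ℂ E] {A B : E} (hcd : c ≤ d)
    (hH : DifferentiableOn ℂ H (im ⁻¹' Set.Icc c d))
    (hint : Integrable fun x : ℝ => H (x + c * I) - H (x + d * I))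
    (htop : Tendsto H (comap re atTop ⊓ 𝓟 (im ⁻¹' Set.Icc c d)) (𝓝 A))
    (hbot : Tendsto H (comap re atBot ⊓ 𝓟 (im ⁻¹' Set.Icc c d)) (𝓝 B)) :
    ∫ x : ℝ, (H (x + c * I) - H (x + d * I)) = I • (d - c) • (B - A) := by
  have horizontal_integrable {y : ℝ} (hy : y ∈ Set.Icc c d) (R : ℝ) :
      IntervalIntegrable (fun x : ℝ => H (x + y * I)) volume (-R) R :=
    (hH.continuousOn.comp_continuous (by fun_prop) (by simpa using hy)).intervalIntegrable _ _
  have rectangle (R : ℝ) : ∫ x in (-R)..R, (H (x + c * I) - H (x + d * I)) =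
      I • (∫ y : ℝ in c..d, H ((-R : ℝ) + y * I)) - I • ∫ y : ℝ in c..d, H (R + y * I) := by
    have cauchy := integral_boundary_rect_eq_zero_of_differentiableOn H ⟨-R, c⟩ ⟨R, d⟩
      (hH.mono fun z hz => by simpa [Set.uIcc_of_le hcd] using hz.2)
    rw [intervalIntegral.integral_sub (horizontal_integrable ⟨le_rfl, hcd⟩ R)
      (horizontal_integrable ⟨hcd, le_rfl⟩ R), ← sub_eq_zero, ← cauchy]
    abel
  have left_edge := (tendsto_intervalIntegral_vertical hcd hH.continuousOn hbot).comp
    tendsto_neg_atTop_atBot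
  have right_edge := tendsto_intervalIntegral_vertical hcd hH.continuousOn htop
  have lim := (left_edge.const_smul I).sub (right_edge.const_smul I)
  rw [← smul_sub, ← smul_sub] at lim
  exact tendsto_nhds_unique
    (intervalIntegral_tendsto_integral hint tendsto_neg_atTop_atBot tendsto_id)
    (lim.congr fun R => (rectangle R).symm)

end Strip

section OneVariableIntegral

open Filter Topology Asymptotics

lemma eventually_one_le_abs_re_sub (r : ℂ) :
    ∀ᶠ z : ℂ in comap re (cocompact ℝ), 1 ≤ |(z - r).re| := by
  have h : Tendsto (fun z : ℂ => |z.re|) (comap re (cocompact ℝ)) atTop :=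
    (tendsto_norm_cocompact_atTop (E := ℝ)).comp tendsto_comap
  filter_upwards [h.eventually_ge_atTop (1 + |r.re|)] with z hz
  rw [sub_re]
  linarith [abs_sub_abs_le_abs_sub z.re r.re]

lemma eventually_cosh_sub_ne_zero (r : ℂ) :
    ∀ᶠ z : ℂ in comap re (cocompact ℝ), cosh (z - r) ≠ 0 := by
  filter_upwards [eventually_one_le_abs_re_sub r] with z hz
  exact norm_pos_iff.1
    ((by positivity : (0 : ℝ) < _).trans_le (exp_abs_re_div_four_le_norm_cosh hz))

lemma isBigO_inv_cosh_sub (r : ℂ) :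
    (fun z : ℂ => (cosh (z - r))⁻¹) =O[comap re (cocompact ℝ)] fun z => Real.exp (-|z.re|) := by
  refine IsBigO.of_bound (4 * Real.exp |r.re|) ?_
  filter_upwards [eventually_one_le_abs_re_sub r] with z hz
  calc ‖(cosh (z - r))⁻¹‖ ≤ (Real.exp |(z - r).re| / 4)⁻¹ := by
        rw [norm_inv]
        exact inv_anti₀ (by positivity) (exp_abs_re_div_four_le_norm_cosh hz)
    _ ≤ (Real.exp (|z.re| - |r.re|) / 4)⁻¹ := by
        gcongr
        exact abs_sub_abs_le_abs_sub z.re r.re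
    _ = 4 * Real.exp |r.re| * ‖Real.exp (-|z.re|)‖ := by
        rw [Real.norm_of_nonneg (Real.exp_pos _).le, Real.exp_sub, Real.exp_neg]
        field_simp

lemma isBigO_exp_mul_strip (a : ℂ) (c d : ℝ) :
    (fun z : ℂ => exp (z * a)) =O[𝓟 (im ⁻¹' Set.Icc c d)]
      fun z => Real.exp (|a.re| * |z.re|) := by
  refine IsBigO.of_bound (Real.exp (max |c| |d| * |a.im|)) (eventually_principal.2 fun z hz => ?_)
  rw [norm_exp, Real.norm_of_nonneg (Real.exp_pos _).le, ← Real.exp_add, mul_re]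
  have h_im : |z.im| * |a.im| ≤ max |c| |d| * |a.im| := by
    gcongr
    exact abs_le_max_abs_abs hz.1 hz.2
  have h_re := le_abs_self (z.re * a.re)
  have h_im' := neg_abs_le (z.im * a.im)
  rw [abs_mul] at h_re h_im'
  exact Real.exp_le_exp.2 (by linarith)

lemma tendsto_exp_mul_div_cosh_mul_cosh_strip {a : ℂ} (ha : |a.re| < 2) (t s : ℂ) (c d : ℝ) :
    Tendsto (fun z : ℂ => exp (z * a) / (cosh (z - t) * cosh (z - s)))
      (comap re (cocompact ℝ) ⊓ 𝓟 (im ⁻¹' Set.Icc c d)) (𝓝 0) := by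
  have bigO := ((isBigO_exp_mul_strip a c d).mono inf_le_right).mul
    (((isBigO_inv_cosh_sub t).mul (isBigO_inv_cosh_sub s)).mono inf_le_left)
  have abs_re_atTop : Tendsto (fun z : ℂ => |z.re|)
      (comap re (cocompact ℝ) ⊓ 𝓟 (im ⁻¹' Set.Icc c d)) atTop :=
    ((tendsto_norm_cocompact_atTop (E := ℝ)).comp tendsto_comap).mono_left inf_le_left
  have decay := Real.tendsto_exp_neg_atTop_nhds_zero.comp
    (abs_re_atTop.const_mul_atTop (sub_pos.2 ha))
  refine (bigO.trans_tendsto (decay.congr fun z => ?_)).congr fun z => ?_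
  · rw [Function.comp_apply, ← Real.exp_add, ← Real.exp_add]
    ring_nf
  · rw [← mul_inv, div_eq_mul_inv]

lemma tendsto_tanh_sub_comap_re_atTop (r : ℂ) :
    Tendsto (fun z : ℂ => tanh (z - r)) (comap re atTop) (𝓝 1) := by
  have le_cocompact : comap re atTop ≤ comap re (cocompact ℝ) := comap_mono atTop_le_cocompact
  have exp_neg_bounded : (fun z : ℂ => exp (-(z - r))) =O[comap re atTop] fun _ => (1 : ℝ) := by
    refine IsBigO.of_bound 1 ?_
    filter_upwards [tendsto_comap.eventually_ge_atTop r.re] with z hz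
    simpa [norm_exp] using hz
  have decay : Tendsto (fun z : ℂ => Real.exp (-|z.re|)) (comap re atTop) (𝓝 0) :=
    Real.tendsto_exp_neg_atTop_nhds_zero.comp (tendsto_abs_atTop_atTop.comp tendsto_comap)
  have error : Tendsto (fun z : ℂ => exp (-(z - r)) * (cosh (z - r))⁻¹) (comap re atTop) (𝓝 0) :=
    (exp_neg_bounded.mul ((isBigO_inv_cosh_sub r).mono le_cocompact)).trans_tendsto
      (by simpa only [one_mul] using decay)
  have lim := error.const_sub 1
  rw [sub_zero] at lim
  refine lim.congr' ?_
  filter_upwards [le_cocompact (eventually_cosh_sub_ne_zero r)] with z hz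
  rw [← cosh_sub_sinh, tanh_eq_sinh_div_cosh]
  field_simp
  ring

lemma tendsto_tanh_sub_comap_re_atBot (r : ℂ) :
    Tendsto (fun z : ℂ => tanh (z - r)) (comap re atBot) (𝓝 (-1)) := by
  have neg : Tendsto (fun z : ℂ => -z) (comap re atBot) (comap re atTop) :=
    tendsto_comap_iff.2 (tendsto_neg_atBot_atTop.comp tendsto_comap)
  refine ((tendsto_tanh_sub_comap_re_atTop (-r)).comp neg).neg.congr fun z => ?_
  rw [Function.comp_apply, ← tanh_neg]
  ring_nf

/-- The function `(exp (z * a) - exp (p * a)) * tanh (z - r)` with `p = r + π i / 2`: subtracting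
the constant `exp (p * a)` cancels the residue of `tanh (z - r)` at its pole `p`. Both the
numerator and the denominator are divided by `z - p` through `dslope`, so that the value at `p` is
the correct one. -/
noncomputable def expTanh (a r z : ℂ) : ℂ :=
  dslope (fun w => exp (w * a)) (r + Real.pi / 2 * I) z * sinh (z - r) /
    dslope (fun w => cosh (w - r)) (r + Real.pi / 2 * I) z

lemma expTanh_eq (a : ℂ) {r z : ℂ} (hz : cosh (z - r) ≠ 0) :
    expTanh a r z = (exp (z * a) - exp ((r + Real.pi / 2 * I) * a)) * tanh (z - r) := by
  have cosh_pole : cosh (r + Real.pi / 2 * I - r) = 0 := by simp [cosh_mul_I]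
  have hne : z ≠ r + Real.pi / 2 * I := by
    rintro rfl
    exact hz cosh_pole
  have := sub_ne_zero.2 hne
  rw [expTanh, dslope_of_ne _ hne, dslope_of_ne _ hne, slope_def_field, slope_def_field, cosh_pole,
    sub_zero, tanh_eq_sinh_div_cosh]
  generalize r + Real.pi / 2 * I = p at *
  field_simp

lemma dslope_cosh_sub_ne_zero {r z : ℂ} (hz : |(z - (r + Real.pi / 2 * I)).im| < Real.pi) :
    dslope (fun w => cosh (w - r)) (r + Real.pi / 2 * I) z ≠ 0 := by
  have cosh_pole : cosh (r + Real.pi / 2 * I - r) = 0 := by simp [cosh_mul_I]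
  rcases eq_or_ne z (r + Real.pi / 2 * I) with rfl | hne
  · have hderiv := (hasDerivAt_cosh (r + Real.pi / 2 * I - r)).comp_sub_const _ r
    rw [dslope_same, hderiv.deriv, add_sub_cancel_left, sinh_mul_I, sin_pi_div_two, one_mul]
    exact I_ne_zero
  · rw [dslope_of_ne _ hne, slope_def_field, cosh_pole, sub_zero, cosh_eq_I_mul_sinh_sub, sub_sub]
    exact div_ne_zero (mul_ne_zero I_ne_zero (sinh_ne_zero_of_abs_im_lt_pi hz (sub_ne_zero.2 hne)))
      (sub_ne_zero.2 hne)

lemma differentiableOn_expTanh (a : ℂ) {r : ℂ} (hr : |r.im| < Real.pi / 2) :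
    DifferentiableOn ℂ (expTanh a r) (im ⁻¹' Set.Icc 0 Real.pi) := by
  have differentiable_dslope {f : ℂ → ℂ} (hf : Differentiable ℂ f) (p : ℂ) :
      Differentiable ℂ (dslope f p) :=
    differentiableOn_univ.1 ((differentiableOn_dslope univ_mem).2 hf.differentiableOn)
  refine DifferentiableOn.div
    ((differentiable_dslope (by fun_prop) _).mul (by fun_prop)).differentiableOn
    (differentiable_dslope (by fun_prop) _).differentiableOn
    fun z hz => dslope_cosh_sub_ne_zero ?_
  have im_pole : (r + Real.pi / 2 * I).im = r.im + Real.pi / 2 := by simp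
  rw [sub_im, im_pole]
  rw [abs_lt] at hr ⊢
  constructor <;> linarith [hz.1, hz.2]

lemma expTanh_sub_expTanh_add_pi_mul_I (a : ℂ) {r z : ℂ} (hz : cosh (z - r) ≠ 0) :
    expTanh a r z - expTanh a r (z + Real.pi * I) =
      (1 - exp (Real.pi * I * a)) * (exp (z * a) * tanh (z - r)) := by
  have shift : z + Real.pi * I - r = z - r + Real.pi * I := by ring
  rw [expTanh_eq a hz, expTanh_eq a (by rwa [shift, cosh_add_pi_mul_I, neg_ne_zero]), shift,
    tanh_add_pi_mul_I, add_mul z, exp_add]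
  ring

lemma tendsto_expTanh_sub_expTanh {a : ℂ} (ha : |a.re| < 2) (t s : ℂ) (c d : ℝ) {L : Filter ℝ}
    (hL : L ≤ cocompact ℝ) {ε : ℂ}
    (hε : ∀ r : ℂ, Tendsto (fun z : ℂ => tanh (z - r)) (comap re L) (𝓝 ε)) :
    Tendsto (fun z => expTanh a s z - expTanh a t z) (comap re L ⊓ 𝓟 (im ⁻¹' Set.Icc c d))
      (𝓝 ((exp ((t + Real.pi / 2 * I) * a) - exp ((s + Real.pi / 2 * I) * a)) * ε)) := by
  have le_cocompact : comap re L ⊓ 𝓟 (im ⁻¹' Set.Icc c d) ≤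
      comap re (cocompact ℝ) ⊓ 𝓟 (im ⁻¹' Set.Icc c d) := inf_le_inf_right _ (comap_mono hL)
  have le_comap : comap re L ⊓ 𝓟 (im ⁻¹' Set.Icc c d) ≤ comap re L := inf_le_left
  have main := ((tendsto_exp_mul_div_cosh_mul_cosh_strip ha t s c d).mono_left
    le_cocompact).const_mul (sinh (t - s))
  have lim_t := ((hε t).mono_left le_comap).const_mul (exp ((t + Real.pi / 2 * I) * a))
  have lim_s := ((hε s).mono_left le_comap).const_mul (exp ((s + Real.pi / 2 * I) * a))
  have lim := main.add (lim_t.sub lim_s)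
  rw [mul_zero, zero_add, ← sub_mul] at lim
  refine lim.congr' ?_
  filter_upwards [(le_cocompact.trans inf_le_left) (eventually_cosh_sub_ne_zero t),
    (le_cocompact.trans inf_le_left) (eventually_cosh_sub_ne_zero s)] with z ht hs
  have tanh_sub := tanh_sub_tanh hs ht
  rw [sub_sub_sub_cancel_left] at tanh_sub
  rw [expTanh_eq a hs, expTanh_eq a ht]
  linear_combination -exp (z * a) * tanh_sub

lemma exp_mul_tanh_sub_tanh (a : ℂ) {t s : ℂ} (ht : |t.im| < Real.pi / 2)
    (hs : |s.im| < Real.pi / 2) (x : ℝ) :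
    exp (x * a) * (tanh (x - s) - tanh (x - t)) =
      sinh (t - s) * (exp (x * a) / (cosh (t - x) * cosh (s - x))) := by
  rw [← neg_sub s, ← neg_sub t, tanh_neg, tanh_neg, neg_sub_neg,
    tanh_sub_tanh (cosh_sub_ofReal_ne_zero ht x) (cosh_sub_ofReal_ne_zero hs x),
    sub_sub_sub_cancel_right]
  ring

lemma one_sub_exp_mul_integral_exp_mul_tanh_sub_tanh {a t s : ℂ} (ha : |a.re| < 2)
    (ht : |t.im| < Real.pi / 2) (hs : |s.im| < Real.pi / 2) :
    (1 - exp (Real.pi * I * a)) * ∫ x : ℝ, exp (x * a) * (tanh (x - s) - tanh (x - t)) =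
      -2 * Real.pi * I *
        (exp ((t + Real.pi / 2 * I) * a) - exp ((s + Real.pi / 2 * I) * a)) := by
  have cosh_ne_zero {r : ℂ} (hr : |r.im| < Real.pi / 2) (x : ℝ) : cosh (x - r) ≠ 0 := by
    rw [← neg_sub, cosh_neg]
    exact cosh_sub_ofReal_ne_zero hr x
  have boundary (x : ℝ) :
      expTanh a s (x + (0 : ℝ) * I) - expTanh a t (x + (0 : ℝ) * I) -
          (expTanh a s (x + Real.pi * I) - expTanh a t (x + Real.pi * I)) =
        (1 - exp (Real.pi * I * a)) * (exp (x * a) * (tanh (x - s) - tanh (x - t))) := by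
    rw [ofReal_zero, zero_mul, add_zero]
    linear_combination expTanh_sub_expTanh_add_pi_mul_I a (cosh_ne_zero hs x) -
      expTanh_sub_expTanh_add_pi_mul_I a (cosh_ne_zero ht x)
  have integrable : Integrable fun x : ℝ => exp (x * a) * (tanh (x - s) - tanh (x - t)) := by
    simp only [exp_mul_tanh_sub_tanh a ht hs]
    exact (integrable_exp_mul_div_cosh_mul_cosh ha ht hs).const_mul _
  have contour := integral_sub_eq_of_differentiableOn_strip Real.pi_pos.le
    ((differentiableOn_expTanh a hs).sub (differentiableOn_expTanh a ht))
    (by simpa only [Pi.sub_apply, boundary] using integrable.const_mul _)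
    (tendsto_expTanh_sub_expTanh ha t s _ _ atTop_le_cocompact tendsto_tanh_sub_comap_re_atTop)
    (tendsto_expTanh_sub_expTanh ha t s _ _ atBot_le_cocompact tendsto_tanh_sub_comap_re_atBot)
  simp only [Pi.sub_apply, boundary, integral_const_mul] at contour
  rw [contour, sub_zero, smul_eq_mul, real_smul]
  ring

lemma sin_mul_integral_exp_mul_tanh_sub_tanh {a t s : ℂ} (ha : |a.re| < 2)
    (ht : |t.im| < Real.pi / 2) (hs : |s.im| < Real.pi / 2) :
    sin (Real.pi * a / 2) * ∫ x : ℝ, exp (x * a) * (tanh (x - s) - tanh (x - t)) =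
      Real.pi * (exp (t * a) - exp (s * a)) := by
  have contour := one_sub_exp_mul_integral_exp_mul_tanh_sub_tanh ha ht hs
  set w := exp (Real.pi * a / 2 * I) with hw
  have hw₀ : w ≠ 0 := exp_ne_zero _
  have exp_pole (r : ℂ) : exp ((r + Real.pi / 2 * I) * a) = exp (r * a) * w := by
    rw [hw, ← exp_add]
    ring_nf
  have exp_period : exp (Real.pi * I * a) = w * w := by
    rw [hw, ← exp_add]
    ring_nf
  have sin_eq : 2 * w * sin (Real.pi * a / 2) = (1 - w * w) * I := by
    rw [sin, neg_mul, exp_neg, ← hw]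
    field_simp
  rw [exp_pole, exp_pole, exp_period] at contour
  refine mul_left_cancel₀ (mul_ne_zero two_ne_zero hw₀) ?_
  rw [← mul_assoc, sin_eq]
  linear_combination I * contour - 2 * Real.pi * w * (exp (t * a) - exp (s * a)) * I_sq

theorem integral_exp_mul_div_cosh_mul_cosh {a t s : ℂ} (ha : |a.re| < 2) (ha₀ : a ≠ 0)
    (ht : |t.im| < Real.pi / 2) (hs : |s.im| < Real.pi / 2) (hts : t ≠ s) :
    ∫ x : ℝ, exp (x * a) / (cosh (t - x) * cosh (s - x)) =
      Real.pi / sin (Real.pi * a / 2) * ((exp (t * a) - exp (s * a)) / sinh (t - s)) := by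
  have key := sin_mul_integral_exp_mul_tanh_sub_tanh ha ht hs
  simp only [exp_mul_tanh_sub_tanh a ht hs, integral_const_mul] at key
  rw [div_mul_div_comm, eq_div_iff
    (mul_ne_zero (sin_pi_mul_div_two_ne_zero ha ha₀) (sinh_sub_ne_zero ht hs hts))]
  linear_combination key

end OneVariableIntegral

section MultiVariableIntegral

lemma integral_det_of_fintype {ι E : Type*} [Fintype ι] [DecidableEq ι] [MeasureSpace E]
    [SigmaFinite (volume : Measure E)] {𝕜 : Type*} [RCLike 𝕜] {g : ι → ι → E → 𝕜}
    (hg : ∀ i k, Integrable (g i k)) :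
    ∫ z : ι → E, (Matrix.of fun i k => g i k (z k)).det =
      (Matrix.of fun i k => ∫ x, g i k x).det := by
  simp only [Matrix.det_apply', Matrix.of_apply]
  rw [integral_finsetSum _ fun σ _ =>
    (Integrable.fintype_prod (f := fun k => g (σ k) k) fun k => hg _ _).const_mul _]
  refine Finset.sum_congr rfl fun σ _ => ?_
  rw [integral_const_mul, integral_fintype_prod_volume_eq_prod fun k => g (σ k) k]

/-- The hyperbolic Vandermonde product `∏_{j < k} sinh (w_j - w_k)`. -/
noncomputable def sinhVandermonde {n : ℕ} (w : Fin n → ℂ) : ℂ :=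
  ∏ q ∈ Finset.univ.filter (fun q : Fin n × Fin n => q.1 < q.2), sinh (w q.1 - w q.2)

lemma sinhVandermonde_ne_zero {n : ℕ} {t : Fin n → ℂ} (ht : ∀ j, |(t j).im| < Real.pi / 2)
    (htt : ∀ j k, j < k → t j ≠ t k) : sinhVandermonde t ≠ 0 :=
  Finset.prod_ne_zero_iff.2 fun _ hq =>
    sinh_sub_ne_zero (ht _) (ht _) (htt _ _ (Finset.mem_filter.1 hq).2)

theorem det_inv_cosh_sub {n : ℕ} (t z : Fin n → ℂ) (htz : ∀ i j, cosh (t i - z j) ≠ 0) :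
    (Matrix.of fun i j => (cosh (t i - z j))⁻¹).det =
      sinhVandermonde t * sinhVandermonde z / ∏ i, ∏ j, cosh (t i - z j) :=
  det_inv_of_mul_sub_mul_eq (fun i j => cosh (t i - z j)) (fun i k => sinh (t i - t k))
    (fun j l => sinh (z j - z l)) htz fun _ _ _ _ => cosh_mul_cosh_sub_cosh_mul_cosh _ _ _ _

variable {N : ℕ} {t : Fin (N + 1) → ℂ} {a : Fin N → ℂ}

/-- The integrand of `C_N(u, t)`, with `a j` standing for `u_{N+1} - u_j`. -/
noncomputable def sinhCoshIntegrand (t : Fin (N + 1) → ℂ) (a : Fin N → ℂ) (z : Fin N → ℝ) : ℂ :=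
  sinhVandermonde (fun k => (z k : ℂ)) / (∏ j, ∏ k, cosh (t j - z k)) * exp (∑ j, z j * a j)

lemma continuous_sinhCoshIntegrand (ht : ∀ j, |(t j).im| < Real.pi / 2) (a : Fin N → ℂ) :
    Continuous (sinhCoshIntegrand t a) := by
  unfold sinhCoshIntegrand sinhVandermonde
  refine (Continuous.div (by fun_prop) (by fun_prop) fun z => ?_).mul (by fun_prop)
  exact Finset.prod_ne_zero_iff.2 fun j _ => Finset.prod_ne_zero_iff.2 fun k _ =>
    cosh_sub_ofReal_ne_zero (ht j) (z k)

lemma norm_sinhVandermonde_ofReal_le (z : Fin N → ℝ) :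
    ‖sinhVandermonde fun k => (z k : ℂ)‖ ≤ ∏ k, Real.exp |z k| ^ (N - 1) := by
  have prod_pairs := prod_filter_lt_mul fun k => Real.exp |z k|
  rw [Fintype.card_fin] at prod_pairs
  rw [sinhVandermonde, norm_prod, ← prod_pairs]
  exact Finset.prod_le_prod (fun _ _ => norm_nonneg _) fun _ _ => norm_sinh_ofReal_sub_le _ _

lemma norm_sinhCoshIntegrand_le (t : Fin (N + 1) → ℂ) (a : Fin N → ℂ) (z : Fin N → ℝ) :
    ‖sinhCoshIntegrand t a z‖ ≤
      ∏ k, Real.exp (((N - 1 : ℕ) + |(a k).re|) * |z k|) / ‖∏ j, cosh (t j - z k)‖ := by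
  have norm_exp_le : ‖exp (∑ j, z j * a j)‖ ≤ ∏ k, Real.exp (|(a k).re| * |z k|) := by
    rw [exp_sum, norm_prod]
    exact Finset.prod_le_prod (fun _ _ => norm_nonneg _) fun _ _ => norm_exp_ofReal_mul_le _ _
  calc ‖sinhCoshIntegrand t a z‖
      = ‖sinhVandermonde fun k => (z k : ℂ)‖ * ‖exp (∑ j, z j * a j)‖ /
          ‖∏ k, ∏ j, cosh (t j - z k)‖ := by
        rw [sinhCoshIntegrand, norm_mul, norm_div, Finset.prod_comm, div_mul_eq_mul_div]
    _ ≤ (∏ k, Real.exp |z k| ^ (N - 1)) * (∏ k, Real.exp (|(a k).re| * |z k|)) /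
          ‖∏ k, ∏ j, cosh (t j - z k)‖ := by
        gcongr
        exact norm_sinhVandermonde_ofReal_le z
    _ = ∏ k, Real.exp (((N - 1 : ℕ) + |(a k).re|) * |z k|) / ‖∏ j, cosh (t j - z k)‖ := by
        rw [norm_prod, ← Finset.prod_mul_distrib, ← Finset.prod_div_distrib]
        simp only [add_mul, Real.exp_add, Real.exp_nat_mul]

theorem integrable_sinhCoshIntegrand (ht : ∀ j, |(t j).im| < Real.pi / 2)
    (ha : ∀ k, |(a k).re| < 2) : Integrable (sinhCoshIntegrand t a) := by
  have exponent_lt (k : Fin N) :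
      ((N - 1 : ℕ) + |(a k).re| : ℝ) < Fintype.card (Fin (N + 1)) := by
    rw [Fintype.card_fin, Nat.cast_sub k.pos, Nat.cast_add]
    push_cast
    linarith [ha k]
  exact (Integrable.fintype_prod fun k =>
    integrable_exp_mul_abs_div_norm_prod_cosh ht (exponent_lt k)).mono'
      (continuous_sinhCoshIntegrand ht a).aestronglyMeasurable
      (.of_forall (norm_sinhCoshIntegrand_le t a))

lemma sinhVandermonde_mul_sinhCoshIntegrand (ht : ∀ j, |(t j).im| < Real.pi / 2) (a : Fin N → ℂ)
    (z : Fin N → ℝ) :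
    sinhVandermonde (fun i => t i.castSucc) * sinhCoshIntegrand t a z =
      (Matrix.of fun i k => exp (z k * a k) /
        (cosh (t i.castSucc - z k) * cosh (t (Fin.last N) - z k))).det := by
  have column_factor := Matrix.det_mul_row
    (fun k => exp (z k * a k) / cosh (t (Fin.last N) - z k))
    (Matrix.of fun i k : Fin N => (cosh (t i.castSucc - z k))⁻¹)
  have cauchy := det_inv_cosh_sub (fun i => t i.castSucc) (fun k => (z k : ℂ))
    fun i k => cosh_sub_ofReal_ne_zero (ht i.castSucc) (z k)
  simp only [Matrix.of_apply, ← div_eq_mul_inv, div_div] at column_factor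
  simp only [mul_comm (cosh (t (Fin.castSucc _) - _))]
  rw [column_factor, cauchy, sinhCoshIntegrand, Fin.prod_univ_castSucc, exp_sum,
    Finset.prod_div_distrib]
  ring

lemma det_exp_mul_sub_exp_last_mul (t : Fin (N + 1) → ℂ) (a : Fin N → ℂ) :
    (Matrix.of fun i k => exp (t i.castSucc * a k) - exp (t (Fin.last N) * a k)).det =
      ∑ τ : Equiv.Perm (Fin (N + 1)), ((Equiv.Perm.sign τ : ℤ) : ℂ) *
        exp (∑ j : Fin N, t (τ j.castSucc) * a j) := by
  have bordered := det_eq_last_mul_det_sub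
    (Matrix.of fun i j => exp (t i * (Fin.snoc a 0 : Fin (N + 1) → ℂ) j)) (exp_ne_zero _)
  simp only [Matrix.of_apply, Fin.snoc_castSucc, Fin.snoc_last, mul_zero, exp_zero, div_one,
    one_mul] at bordered
  rw [← bordered, Matrix.det_apply']
  simp only [Matrix.of_apply, Fin.prod_univ_castSucc, Fin.snoc_castSucc, Fin.snoc_last, mul_zero,
    exp_zero, mul_one, exp_sum]

theorem integral_sinhCoshIntegrand (ht : ∀ j, |(t j).im| < Real.pi / 2)
    (htt : ∀ j k, j < k → t j ≠ t k) (ha : ∀ k, |(a k).re| < 2) (ha₀ : ∀ k, a k ≠ 0) :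
    ∫ z, sinhCoshIntegrand t a z =
      (∏ k, (Real.pi : ℂ) / sin (Real.pi * a k / 2)) *
        (∏ q ∈ Finset.univ.filter (fun q : Fin (N + 1) × Fin (N + 1) => q.1 < q.2),
          1 / sinh (t q.1 - t q.2)) *
        ∑ τ : Equiv.Perm (Fin (N + 1)), ((Equiv.Perm.sign τ : ℤ) : ℂ) *
          exp (∑ j : Fin N, t (τ j.castSucc) * a j) := by
  have vandermonde_ne_zero : sinhVandermonde (fun i : Fin N => t i.castSucc) ≠ 0 :=
    sinhVandermonde_ne_zero (fun _ => ht _) fun _ _ hjk =>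
      htt _ _ (Fin.castSucc_lt_castSucc_iff.2 hjk)
  have vandermonde_split :
      ∏ q ∈ Finset.univ.filter (fun q : Fin (N + 1) × Fin (N + 1) => q.1 < q.2),
          1 / sinh (t q.1 - t q.2) =
        (∏ i : Fin N, (sinh (t i.castSucc - t (Fin.last N)))⁻¹) *
          (sinhVandermonde fun i : Fin N => t i.castSucc)⁻¹ := by
    simp only [one_div, sinhVandermonde, ← Finset.prod_inv_distrib]
    exact prod_filter_lt_castSucc fun i j => (sinh (t i - t j))⁻¹
  have entry (i k : Fin N) :
      ∫ x : ℝ, exp (x * a k) / (cosh (t i.castSucc - x) * cosh (t (Fin.last N) - x)) =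
        (sinh (t i.castSucc - t (Fin.last N)))⁻¹ * (Real.pi / sin (Real.pi * a k / 2) *
          (exp (t i.castSucc * a k) - exp (t (Fin.last N) * a k))) := by
    rw [integral_exp_mul_div_cosh_mul_cosh (ha k) (ha₀ k) (ht _) (ht _)
      (htt _ _ (Fin.castSucc_lt_last i))]
    ring
  refine mul_left_cancel₀ vandermonde_ne_zero ?_
  rw [← integral_const_mul]
  simp only [sinhVandermonde_mul_sinhCoshIntegrand ht]
  rw [integral_det_of_fintype fun i k =>
    integrable_exp_mul_div_cosh_mul_cosh (ha k) (ht i.castSucc) (ht (Fin.last N))]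
  simp only [entry]
  rw [det_of_mul_mul, det_exp_mul_sub_exp_last_mul, vandermonde_split]
  field_simp

end MultiVariableIntegral

/-- The integral `C_N(u,t)` (Lemma C.3): absolute convergence for
`|Re(u_{N+1}−u_i)| < 2`, `|Im t_j| < π/2`, and explicit evaluation under the
additional nondegeneracy assumptions. -/
theorem statement3 (N : ℕ) (hN : 1 ≤ N) (u t : Fin (N + 1) → ℂ)
    (hu : ∀ i : Fin N, |(u (Fin.last N) - u (Fin.castSucc i)).re| < 2)
    (ht : ∀ j : Fin (N + 1), |(t j).im| < Real.pi / 2) :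
    Integrable (fun z : Fin N → ℝ =>
      (∏ q ∈ Finset.univ.filter (fun q : Fin N × Fin N => q.1 < q.2),
        Complex.sinh ((z q.1 : ℂ) - (z q.2 : ℂ))) /
        (∏ j : Fin (N + 1), ∏ k : Fin N, Complex.cosh (t j - (z k : ℂ))) *
        Complex.exp (∑ j : Fin N, (z j : ℂ) * (u (Fin.last N) - u (Fin.castSucc j))))
    ∧ ((∀ i : Fin N, u (Fin.castSucc i) ≠ u (Fin.last N)) →
       (∀ j k : Fin (N + 1), j < k → t j ≠ t k) →
      ∫ z : Fin N → ℝ,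
        (∏ q ∈ Finset.univ.filter (fun q : Fin N × Fin N => q.1 < q.2),
          Complex.sinh ((z q.1 : ℂ) - (z q.2 : ℂ))) /
          (∏ j : Fin (N + 1), ∏ k : Fin N, Complex.cosh (t j - (z k : ℂ))) *
          Complex.exp (∑ j : Fin N, (z j : ℂ) * (u (Fin.last N) - u (Fin.castSucc j)))
      = (∏ j : Fin N,
          (Real.pi : ℂ) / Complex.sin ((Real.pi : ℂ) * (u (Fin.last N) - u (Fin.castSucc j)) / 2)) *
        (∏ q ∈ Finset.univ.filter (fun q : Fin (N + 1) × Fin (N + 1) => q.1 < q.2),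
          1 / Complex.sinh (t q.1 - t q.2)) *
        ∑ τ : Equiv.Perm (Fin (N + 1)), ((Equiv.Perm.sign τ : ℤ) : ℂ) *
          Complex.exp (∑ j : Fin N, t (τ (Fin.castSucc j)) * (u (Fin.last N) - u (Fin.castSucc j)))) := by
  refine ⟨integrable_sinhCoshIntegrand ht hu, fun hu₀ htt => ?_⟩
  exact integral_sinhCoshIntegrand ht htt hu fun i => sub_ne_zero.2 (hu₀ i).symm
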